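/- arXiv:1603.08542 — 2 statements merged into one kernel-verified Lean document; each statement's English description precedes it below -/
import Mathlib

section
/- Among all ellipses of the form x²/a² + (y − b)²/b² = 1 (with a, b > 0) inscribed in the closed unit semicircular region {(x, y) : x² + y² ≤ 1, y ≥ 0}, the area is at most 2√3·π/9: if every point (x, y) satisfying x²/a² + (y − b)²/b² = 1 also satisfies x² + y² ≤ 1, then π·a·b ≤ 2√3·π/9, with equality if and only if a = √6/3 and b = √2/3. -/
/-!
The point `(u, v) = (a cos θ, b + b sin θ)` of the ellipse lies in the unit disc, so
`2 u v ≤ u² + v² ≤ 1`, that is, `2 a b · cos θ (1 + sin θ) ≤ 1`. The best choice of `θ` is the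
maximizer `π / 6` of `cos θ (1 + sin θ)`, and it gives the sharp bound on `a b`. Equality forces
`u = v = √(1 / 2)`: the extremal ellipse touches the circle on the diagonal.
-/

theorem ellipse_equation_cos_sin {a b : ℝ} (ha : a ≠ 0) (hb : b ≠ 0) (k θ : ℝ) :
    (a * Real.cos θ) ^ 2 / a ^ 2 + (k + b * Real.sin θ - k) ^ 2 / b ^ 2 = 1 := by
  rw [add_sub_cancel_left, mul_pow, mul_pow, mul_div_cancel_left₀ _ (pow_ne_zero 2 ha),
    mul_div_cancel_left₀ _ (pow_ne_zero 2 hb), Real.cos_sq_add_sin_sq]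

theorem two_mul_mul_eq_iff_of_sq_add_sq_le {u v r : ℝ} (hu : 0 ≤ u) (h : u ^ 2 + v ^ 2 ≤ r) :
    2 * u * v = r ↔ u = √(r / 2) ∧ v = √(r / 2) := by
  constructor
  · intro huv
    have hsq : (u - v) ^ 2 ≤ 0 := by linarith [sub_sq u v]
    have hvu : v = u := (sub_eq_zero.mp (sq_nonpos_iff _ |>.mp hsq)).symm
    subst v
    have hroot : u = √(r / 2) := by
      rw [← huv, mul_assoc, mul_div_cancel_left₀ _ two_ne_zero, Real.sqrt_mul_self hu]
    exact ⟨hroot, hroot⟩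
  · rintro ⟨hu', hv'⟩
    have hr : 0 ≤ r := (add_nonneg (sq_nonneg u) (sq_nonneg v)).trans h
    rw [hu', hv', mul_assoc, Real.mul_self_sqrt (by positivity), mul_div_cancel₀ r two_ne_zero]

theorem sqrt_one_div_eq_sqrt_div_self (x : ℝ) : √(1 / x) = √x / x := by
  rw [Real.sqrt_div zero_le_one, Real.sqrt_one, Real.sqrt_div_self']

theorem mul_sqrt_three_div_two_eq_iff {a : ℝ} : a * (√3 / 2) = √(1 / 2) ↔ a = √6 / 3 := by
  have hvalue : √6 / 3 * (√3 / 2) = √(1 / 2) := by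
    have h6 : √6 = √2 * √3 := by rw [← Real.sqrt_mul zero_le_two]; norm_num
    rw [sqrt_one_div_eq_sqrt_div_self, h6]
    linear_combination √2 / 6 * Real.sq_sqrt (zero_le_three (α := ℝ))
  rw [← hvalue, mul_left_inj' (by positivity)]

theorem add_mul_half_eq_iff {b : ℝ} : b + b * (1 / 2) = √(1 / 2) ↔ b = √2 / 3 := by
  rw [sqrt_one_div_eq_sqrt_div_self]
  constructor <;> intro h <;> linarith

/-- Among all ellipses x²/a² + (y−b)²/b² = 1 inscribed in the closed unit semicircular region,
the area π·a·b is at most 2√3·π/9, with equality iff a = √6/3 and b = √2/3. -/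
theorem inscribed_ellipse_max_area (a b : ℝ) (ha : 0 < a) (hb : 0 < b)
    (hins : ∀ x y : ℝ, x ^ 2 / a ^ 2 + (y - b) ^ 2 / b ^ 2 = 1 → x ^ 2 + y ^ 2 ≤ 1) :
    Real.pi * a * b ≤ 2 * Real.sqrt 3 * Real.pi / 9 ∧
      (Real.pi * a * b = 2 * Real.sqrt 3 * Real.pi / 9 ↔
        a = Real.sqrt 6 / 3 ∧ b = Real.sqrt 2 / 3) := by
  have hdisc : (a * (√3 / 2)) ^ 2 + (b + b * (1 / 2)) ^ 2 ≤ 1 := by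
    rw [← Real.cos_pi_div_six, ← Real.sin_pi_div_six]
    exact hins _ _ (ellipse_equation_cos_sin ha.ne' hb.ne' b (Real.pi / 6))
  have harea : Real.pi * a * b =
      2 * √3 * Real.pi / 9 * (2 * (a * (√3 / 2)) * (b + b * (1 / 2))) := by
    linear_combination -(Real.pi * a * b / 3) * Real.sq_sqrt (zero_le_three (α := ℝ))
  rw [harea]
  constructor
  · exact mul_le_of_le_one_right (by positivity) ((two_mul_le_add_sq _ _).trans hdisc)
  · rw [mul_eq_left₀ (by positivity), two_mul_mul_eq_iff_of_sq_add_sq_le (by positivity) hdisc,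
      mul_sqrt_three_div_two_eq_iff, add_mul_half_eq_iff]
end

section
/- The optimal inscribed ellipse meets the unit circle exactly at the vertices of the optimal inscribed rectangle: for real numbers x, y, the pair of equations x²/(6/9) + (y − √2/3)²/(2/9) = 1 and x² + y² = 1 holds simultaneously if and only if y = √2/2 and (x = √2/2 or x = −√2/2). -/
/-!
When `A² + b² = A`, subtracting `b²` times the equation of the unit circle from `A b²` times the
equation of the ellipse `x² / A + (y - b)² / b² = 1` leaves the double line `(A y - b)² = 0`: the
ellipse is tangent to the circle wherever they meet, and they meet only at height `b / A`. The
optimal ellipse has `A = 6/9` and `b = √2/3`, hence height `√2/2`.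
-/

section BitangentEllipse

variable {K : Type*} [Field K] {A b : K}

lemma ne_zero_of_sq_add_sq_eq (hb : b ≠ 0) (hAb : A ^ 2 + b ^ 2 = A) : A ≠ 0 := by
  rintro rfl
  exact hb (by simpa using hAb)

lemma ellipse_eq_circle_add_double_line (hb : b ≠ 0) (hAb : A ^ 2 + b ^ 2 = A) (x y : K) :
    A * b ^ 2 * (x ^ 2 / A + (y - b) ^ 2 / b ^ 2 - 1) =
      b ^ 2 * (x ^ 2 + y ^ 2 - 1) + (A * y - b) ^ 2 := by
  have hA : A ≠ 0 := ne_zero_of_sq_add_sq_eq hb hAb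
  have clear_denominators : A * b ^ 2 * (x ^ 2 / A + (y - b) ^ 2 / b ^ 2 - 1) =
      b ^ 2 * x ^ 2 + A * (y - b) ^ 2 - A * b ^ 2 := by
    field_simp
  linear_combination clear_denominators - y ^ 2 * hAb

lemma ellipse_iff_height_of_circle (hb : b ≠ 0) (hAb : A ^ 2 + b ^ 2 = A) {x y : K}
    (hxy : x ^ 2 + y ^ 2 = 1) :
    x ^ 2 / A + (y - b) ^ 2 / b ^ 2 = 1 ↔ A * y = b := by
  have hA : A ≠ 0 := ne_zero_of_sq_add_sq_eq hb hAb
  have double_line : A * b ^ 2 * (x ^ 2 / A + (y - b) ^ 2 / b ^ 2 - 1) = (A * y - b) ^ 2 := by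
    rw [ellipse_eq_circle_add_double_line hb hAb, hxy, sub_self, mul_zero, zero_add]
  rw [← sub_eq_zero, ← mul_eq_zero_iff_left (mul_ne_zero hA (pow_ne_zero 2 hb)), double_line,
    sq_eq_zero_iff, sub_eq_zero]

theorem ellipse_circle_intersection_general {u v : K} (hb : b ≠ 0) (hAb : A ^ 2 + b ^ 2 = A)
    (hv : A * v = b) (huv : u ^ 2 + v ^ 2 = 1) (x y : K) :
    (x ^ 2 / A + (y - b) ^ 2 / b ^ 2 = 1 ∧ x ^ 2 + y ^ 2 = 1) ↔
      (y = v ∧ (x = u ∨ x = -u)) := by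
  have height_iff : A * y = b ↔ y = v := by
    rw [← hv, mul_right_inj' (left_ne_zero_of_mul (hv ▸ hb))]
  have abscissa_iff : x ^ 2 + v ^ 2 = 1 ↔ x = u ∨ x = -u := by
    rw [← huv, add_left_inj, sq_eq_sq_iff_eq_or_eq_neg]
  calc (x ^ 2 / A + (y - b) ^ 2 / b ^ 2 = 1 ∧ x ^ 2 + y ^ 2 = 1)
      ↔ y = v ∧ x ^ 2 + y ^ 2 = 1 :=
        and_congr_left fun hxy ↦ (ellipse_iff_height_of_circle hb hAb hxy).trans height_iff
    _ ↔ y = v ∧ (x = u ∨ x = -u) :=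
        and_congr_right fun hy ↦ hy ▸ abscissa_iff

end BitangentEllipse

/-- The optimal inscribed ellipse meets the unit circle exactly at the vertices of the
optimal inscribed rectangle. -/
theorem ellipse_circle_intersection (x y : ℝ) :
    (x ^ 2 / (6 / 9) + (y - Real.sqrt 2 / 3) ^ 2 / (2 / 9) = 1 ∧ x ^ 2 + y ^ 2 = 1) ↔
      (y = Real.sqrt 2 / 2 ∧ (x = Real.sqrt 2 / 2 ∨ x = -(Real.sqrt 2 / 2))) := by
  have hb : (Real.sqrt 2 / 3) ^ 2 = 2 / 9 := by norm_num [div_pow]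
  rw [← hb]
  exact ellipse_circle_intersection_general (by positivity) (by linarith) (by ring)
    (by linarith) x y
end
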